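/- arXiv:1911.10577 — 2 statements merged into one kernel-verified Lean document; each statement's English description precedes it below -/
import Mathlib

section
/- Let R ⊆ S be an FCP ring extension, J an ideal of S and I := J ∩ R. If R ⊆ S is catenarian, then the induced extension R/I ⊆ S/J (via the injective ring homomorphism R/I → S/J induced by the inclusion R → S) is catenarian. -/
/-!
Taking preimages under `S → S/J` identifies `[R/I, S/J]` with the interval `[R + J, S]` of `[R, S]`,
so it preserves coverings, and it suffices that `R + J ⊆ S` is catenarian.

More generally, if `⊥` to `⊤` is catenarian in a bounded order with both chain conditions, then so
is `B` to `⊤` for every `B` (`IsCatenarianFromTo.to_top`): when `B ≠ ⊥` it covers some `A`, two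
maximal chains from `B` to `⊤` extend by `A` to maximal chains from `A` to `⊤`, and these have equal
length by well-founded induction.
-/

/-- A maximal chain of length `n` from `T` to `U`: each step is a covering. -/
def IsMaxChainFromTo {α : Type*} [PartialOrder α] (T U : α) (n : ℕ)
    (c : Fin (n + 1) → α) : Prop :=
  c 0 = T ∧ c (Fin.last n) = U ∧ ∀ i : Fin n, c i.castSucc ⋖ c i.succ

/-- The subextension determined by `T ≤ U` is catenarian: all maximal chains from
`T` to `U` have the same length. -/
def IsCatenarianFromTo {α : Type*} [PartialOrder α] (T U : α) : Prop :=
  ∀ (n m : ℕ) (c : Fin (n + 1) → α) (d : Fin (m + 1) → α),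
    IsMaxChainFromTo T U n c → IsMaxChainFromTo T U m d → n = m

/-- The extension `R ⊆ S` has FCP: every chain of `R`-subalgebras of `S` is finite. -/
def IsFCPExt (R S : Type*) [CommRing R] [CommRing S] [Algebra R S] : Prop :=
  ∀ C : Set (Subalgebra R S), IsChain (· ≤ ·) C → C.Finite

/-- The extension `R ⊆ S` is catenarian. -/
def IsCatenarianExt (R S : Type*) [CommRing R] [CommRing S] [Algebra R S] : Prop :=
  IsCatenarianFromTo (⊥ : Subalgebra R S) ⊤

/-- The length `ℓ[T,U]`: the supremum of lengths of chains from `T` to `U`. -/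
noncomputable def extLength {α : Type*} [PartialOrder α] (T U : α) : ℕ :=
  sSup {n | ∃ c : Fin (n + 1) → α, StrictMono c ∧ c 0 = T ∧ c (Fin.last n) = U}

theorem IsMaxChainFromTo.cons {α : Type*} [PartialOrder α] {A T U : α} {n : ℕ}
    {c : Fin (n + 1) → α} (h : IsMaxChainFromTo T U n c) (hA : A ⋖ T) :
    IsMaxChainFromTo A U (n + 1) (Fin.cons A c : Fin (n + 1 + 1) → α) := by
  obtain ⟨h0, hl, hc⟩ := h
  refine ⟨rfl, ?_, fun i => ?_⟩
  · rw [← Fin.succ_last, Fin.cons_succ, hl]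
  · refine Fin.cases ?_ (fun j => ?_) i
    · simpa [h0] using hA
    · rw [Fin.cons_succ, ← Fin.succ_castSucc, Fin.cons_succ]
      exact hc j

theorem IsCatenarianFromTo.to_top {α : Type*} [PartialOrder α] [BoundedOrder α]
    [WellFoundedLT α] [WellFoundedGT α] (h : IsCatenarianFromTo (⊥ : α) ⊤) (B : α) :
    IsCatenarianFromTo B ⊤ := by
  induction B using WellFoundedLT.induction with
  | ind B ih =>
    rcases eq_or_ne B ⊥ with rfl | hB
    · exact h
    · obtain ⟨A, -, hA⟩ := exists_le_covBy_of_lt (bot_lt_iff_ne_bot.2 hB)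
      intro n m c d hc hd
      exact Nat.succ_injective (ih A hA.lt _ _ _ _ (hc.cons hA) (hd.cons hA))

theorem IsMaxChainFromTo.map {α β : Type*} [PartialOrder α] [PartialOrder β] {T U : α} {n : ℕ}
    {c : Fin (n + 1) → α} (h : IsMaxChainFromTo T U n c) (e : α ↪o β)
    (he : (Set.range e).OrdConnected) : IsMaxChainFromTo (e T) (e U) n (e ∘ c) :=
  ⟨congrArg e h.1, congrArg e h.2.1, fun i => (h.2.2 i).image e he⟩

section

variable {R S : Type*} [CommRing R] [CommRing S] [Algebra R S]

theorem IsFCPExt.wellFoundedLT (h : IsFCPExt R S) : WellFoundedLT (Subalgebra R S) := by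
  refine ⟨RelEmbedding.wellFounded_iff_isEmpty.2 ⟨fun f => ?_⟩⟩
  have hf : StrictAnti f := fun a b hab => f.map_rel_iff.2 hab
  exact Set.infinite_range_of_injective f.injective (h _ hf.antitone.isChain_range)

theorem IsFCPExt.wellFoundedGT (h : IsFCPExt R S) : WellFoundedGT (Subalgebra R S) := by
  refine ⟨RelEmbedding.wellFounded_iff_isEmpty.2 ⟨fun f => ?_⟩⟩
  have hf : StrictMono f := fun a b hab => f.map_rel_iff.2 hab
  exact Set.infinite_range_of_injective f.injective (h _ hf.monotone.isChain_range)

variable {A₀ B₀ : Type*} [CommRing A₀] [CommRing B₀] [Algebra A₀ B₀]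

/-- The preimage of an `A₀`-subalgebra under `g : S →+* B₀`, as an `R`-subalgebra, where `f` and `g`
form a commutative square with the structure maps of the two extensions. -/
def preimageSubalgebra (f : R →+* A₀) (g : S →+* B₀)
    (hfg : ∀ r, g (algebraMap R S r) = algebraMap A₀ B₀ (f r)) (T : Subalgebra A₀ B₀) :
    Subalgebra R S :=
  { T.toSubsemiring.comap g with
    algebraMap_mem' := fun r => by
      change g (algebraMap R S r) ∈ T
      rw [hfg]
      exact T.algebraMap_mem _ }

/-- Preimages of subalgebras along a surjection `g` form an order embedding. -/
def preimageSubalgebraEmbedding (f : R →+* A₀) (g : S →+* B₀)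
    (hfg : ∀ r, g (algebraMap R S r) = algebraMap A₀ B₀ (f r)) (hg : Function.Surjective g) :
    Subalgebra A₀ B₀ ↪o Subalgebra R S :=
  OrderEmbedding.ofMapLEIff (preimageSubalgebra f g hfg) fun T U => by
    refine ⟨fun h y hy => ?_, fun h x hx => h hx⟩
    obtain ⟨x, rfl⟩ := hg y
    exact h (show x ∈ preimageSubalgebra f g hfg T from hy)

/-- An `R`-subalgebra containing a preimage contains `ker g`, hence is the preimage of its image. -/
theorem ordConnected_range_preimageSubalgebraEmbedding (f : R →+* A₀) (g : S →+* B₀)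
    (hfg : ∀ r, g (algebraMap R S r) = algebraMap A₀ B₀ (f r)) (hf : Function.Surjective f)
    (hg : Function.Surjective g) :
    (Set.range (preimageSubalgebraEmbedding f g hfg hg)).OrdConnected := by
  refine ⟨?_⟩
  rintro _ ⟨T, rfl⟩ _ - A ⟨hTA, -⟩
  have hker : ∀ x, g x = 0 → x ∈ A := fun x hx => hTA (show g x ∈ T from hx ▸ T.zero_mem)
  refine ⟨{ A.toSubsemiring.map g with algebraMap_mem' := fun s => ?_ }, ?_⟩
  · obtain ⟨r, rfl⟩ := hf s
    exact ⟨algebraMap R S r, A.algebraMap_mem r, hfg r⟩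
  · ext x
    constructor
    · rintro ⟨y, hy, hyx⟩
      have hxy : x - y ∈ A := hker _ (by rw [map_sub, hyx, sub_self])
      simpa using A.add_mem hxy hy
    · exact fun hx => ⟨x, hx, rfl⟩

theorem IsCatenarianExt.of_surjective (hcat : IsCatenarianExt R S) (hFCP : IsFCPExt R S)
    (f : R →+* A₀) (g : S →+* B₀) (hf : Function.Surjective f) (hg : Function.Surjective g)
    (hfg : ∀ r, g (algebraMap R S r) = algebraMap A₀ B₀ (f r)) : IsCatenarianExt A₀ B₀ := by
  have := hFCP.wellFoundedLT
  have := hFCP.wellFoundedGT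
  intro n m c d hc hd
  have hrange := ordConnected_range_preimageSubalgebraEmbedding f g hfg hf hg
  have htop : preimageSubalgebraEmbedding f g hfg hg ⊤ = ⊤ :=
    top_unique fun x _ => (show g x ∈ (⊤ : Subalgebra A₀ B₀) from Algebra.mem_top)
  have hcmap := hc.map _ hrange
  have hdmap := hd.map _ hrange
  rw [htop] at hcmap hdmap
  exact IsCatenarianFromTo.to_top hcat _ n m _ _ hcmap hdmap

end

/-- If `R ⊆ S` is a catenarian FCP extension, `J` an ideal of `S` and
`I := J ∩ R`, then the induced extension `R/I ⊆ S/J` is catenarian. -/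
theorem stmt_1 {R S : Type*} [CommRing R] [CommRing S] [Algebra R S]
    (hinj : Function.Injective (algebraMap R S)) (hFCP : IsFCPExt R S)
    (J : Ideal S) (hcat : IsCatenarianExt R S) :
    letI : Algebra (R ⧸ J.comap (algebraMap R S)) (S ⧸ J) :=
      (Ideal.quotientMap J (algebraMap R S) le_rfl).toAlgebra
    IsCatenarianExt (R ⧸ J.comap (algebraMap R S)) (S ⧸ J) := by
  letI : Algebra (R ⧸ J.comap (algebraMap R S)) (S ⧸ J) :=
    (Ideal.quotientMap J (algebraMap R S) le_rfl).toAlgebra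
  exact hcat.of_surjective hFCP (Ideal.Quotient.mk _) (Ideal.Quotient.mk J)
    Ideal.Quotient.mk_surjective Ideal.Quotient.mk_surjective
    fun r => (Ideal.quotientMap_mk (I := J) (f := algebraMap R S) (H := le_rfl) (x := r)).symm
end

section
/- Let R ⊆ S be a catenarian FCP ring extension, let f : R → R' be a flat epimorphism of commutative rings (R' is flat as an R-module and f is an epimorphism in the category of commutative rings), and set S' := R' ⊗_R S. Then the induced extension R' ⊆ S' (the map R' → R' ⊗_R S, which is injective by flatness) is catenarian. -/
open TensorProduct

/-! ### Maximal chains in posets -/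

theorem wellFoundedLT_of_chains_finite {α : Type*} [PartialOrder α]
    (h : ∀ C : Set α, IsChain (· ≤ ·) C → C.Finite) : WellFoundedLT α := by
  refine ⟨RelEmbedding.wellFounded_iff_isEmpty.2 ⟨fun e => ?_⟩⟩
  have hchain : IsChain (· ≤ ·) (Set.range e) := by
    rintro _ ⟨a, rfl⟩ _ ⟨b, rfl⟩ hab
    rcases lt_trichotomy a b with h | h | h
    · exact Or.inr (e.map_rel_iff.2 h).le
    · exact absurd (congrArg e h) hab
    · exact Or.inl (e.map_rel_iff.2 h).le
  exact Set.infinite_range_of_injective e.injective (h _ hchain)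

theorem wellFoundedGT_of_chains_finite {α : Type*} [PartialOrder α]
    (h : ∀ C : Set α, IsChain (· ≤ ·) C → C.Finite) : WellFoundedGT α :=
  have := wellFoundedLT_of_chains_finite (α := αᵒᵈ) fun C hC => h C hC.symm
  inferInstanceAs (WellFoundedLT αᵒᵈ)

theorem isMaxChainFromTo_iff_relSeries {α : Type*} [PartialOrder α] {T U : α} {n : ℕ} :
    (∃ c, IsMaxChainFromTo T U n c) ↔
      ∃ p : RelSeries {(a, b) : α × α | a ⋖ b}, p.length = n ∧ p.head = T ∧ p.last = U := by
  constructor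
  · rintro ⟨c, h0, h1, hc⟩
    exact ⟨⟨n, c, hc⟩, rfl, h0, h1⟩
  · rintro ⟨p, rfl, h0, h1⟩
    exact ⟨p, h0, h1, p.step⟩

theorem exists_isMaxChainFromTo_add {α : Type*} [PartialOrder α] {T U V : α} {n m : ℕ}
    (h₁ : ∃ c, IsMaxChainFromTo T U n c) (h₂ : ∃ c, IsMaxChainFromTo U V m c) :
    ∃ c, IsMaxChainFromTo T V (n + m) c := by
  rw [isMaxChainFromTo_iff_relSeries] at *
  obtain ⟨p, rfl, hp, hp'⟩ := h₁
  obtain ⟨q, rfl, hq, hq'⟩ := h₂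
  exact ⟨p.smash q (hp'.trans hq.symm), rfl, by simpa using hp, by simpa using hq'⟩

theorem exists_isMaxChainFromTo {α : Type*} [PartialOrder α] [WellFoundedLT α] [WellFoundedGT α]
    {T U : α} (h : T ≤ U) : ∃ n c, IsMaxChainFromTo T U n c := by
  obtain ⟨a, h0, n, hn, ha⟩ := exists_covBy_seq_of_wellFoundedLT_wellFoundedGT_of_le h
  exact ⟨n, fun i => a i, h0, hn, fun i => ha i i.2⟩

/-- If `f` identifies `β` with the up-set `[f ⊥, ⊤]` of the catenarian poset `α`, then `β` is
catenarian: one fixed maximal chain from `⊥` to `f ⊥` is put below the images of any two maximal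
chains of `β`, and the two resulting chains have equal length. -/
theorem IsCatenarianFromTo.of_orderEmbedding_Ici {α β : Type*} [PartialOrder α] [BoundedOrder α]
    [PartialOrder β] [BoundedOrder β] [WellFoundedLT α] [WellFoundedGT α]
    (h : IsCatenarianFromTo (⊥ : α) ⊤) (f : β ↪o α)
    (hf : ∀ a, f ⊥ ≤ a → a ∈ Set.range f) : IsCatenarianFromTo (⊥ : β) ⊤ := by
  obtain ⟨k, hk⟩ := exists_isMaxChainFromTo (bot_le : ⊥ ≤ f ⊥)
  have htop : f ⊤ = ⊤ := by
    obtain ⟨b, hb⟩ := hf ⊤ le_top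
    exact top_le_iff.1 (hb ▸ f.monotone le_top)
  have key : ∀ n c, IsMaxChainFromTo (⊥ : β) ⊤ n c →
      ∃ c', IsMaxChainFromTo (⊥ : α) ⊤ (k + n) c' := by
    rintro n c ⟨h0, h1, hc⟩
    refine exists_isMaxChainFromTo_add hk ⟨f ∘ c, by simp [h0], by simp [h1, htop], fun i => ?_⟩
    refine ⟨f.strictMono (hc i).1, fun a ha ha' => ?_⟩
    obtain ⟨b, rfl⟩ := hf a ((f.monotone bot_le).trans ha.le)
    exact (hc i).2 (f.lt_iff_lt.1 ha) (f.lt_iff_lt.1 ha')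
  intro n m c d hc hd
  obtain ⟨c', hc'⟩ := key n c hc
  obtain ⟨d', hd'⟩ := key m d hd
  have hlen : k + n = k + m := h _ _ _ _ hc' hd'
  exact Nat.add_left_cancel hlen

/-! ### Saturated subalgebras -/

section

variable {R S : Type*} (R' : Type*) [CommRing R] [CommRing R'] [Algebra R R'] [CommRing S]
  [Algebra R S]

/-- `T` is saturated with respect to `R → R'` if `x ∈ T` whenever `I x ⊆ T` for some ideal `I` of
`R` with `I R' = R'`. For `R'` flat over `R` this says that `S / T → R' ⊗ (S / T)` is injective. -/
def IsSaturated (T : Subalgebra R S) : Prop :=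
  ∀ (x : S) (I : Ideal R), I.map (algebraMap R R') = ⊤ → (∀ a ∈ I, a • x ∈ T) → x ∈ T

variable {R'}

theorem exists_fg_le_map_eq_top {I : Ideal R} (hI : I.map (algebraMap R R') = ⊤) :
    ∃ J ≤ I, J.FG ∧ J.map (algebraMap R R') = ⊤ := by
  classical
  rw [Ideal.eq_top_iff_one, Ideal.map] at hI
  obtain ⟨t, ht, h1⟩ := Submodule.mem_span_finite_of_mem_span hI
  obtain ⟨s, hs, rfl⟩ := Finset.subset_set_image_iff.1 ht
  refine ⟨Ideal.span s, Ideal.span_le.2 hs, ⟨s, rfl⟩, ?_⟩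
  rw [Ideal.eq_top_iff_one, Ideal.map_span]
  simpa using h1

/-- Saturation passes up along a minimal extension `T ⋖ U`. If `I s ⊆ U` with `I R' = R'`, then
minimality and saturation of `T` give some `a ∈ I` acting bijectively on `U / T`. Surjectivity
allows `s` to be changed by an element of `U` so that `a s ∈ T`; then `a` kills the image of `I s`
in `U / T`, so `I s ⊆ T` by injectivity, and `s ∈ T`. -/
theorem IsSaturated.of_covBy {T U : Subalgebra R S} (hT : IsSaturated R' T) (hTU : T ⋖ U) :
    IsSaturated R' U := by
  intro s I₀ hI₀ hs₀
  obtain ⟨I, hII₀, hfg, hI⟩ := exists_fg_le_map_eq_top hI₀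
  have hs : ∀ a ∈ I, a • s ∈ U := fun a ha => hs₀ a (hII₀ ha)
  -- The elements of `U` carried into `T` by a power of `a` form a ring between `T` and `U`.
  have dich : ∀ a : R, (∀ u ∈ U, a • u ∈ T → u ∈ T) ∨ ∀ u ∈ U, ∃ n : ℕ, a ^ n • u ∈ T := by
    intro a
    let W : Subalgebra R S :=
      { carrier := {u | u ∈ U ∧ ∃ n : ℕ, a ^ n • u ∈ T}
        mul_mem' := by
          rintro u v ⟨hu, n, hn⟩ ⟨hv, m, hm⟩
          refine ⟨mul_mem hu hv, n + m, ?_⟩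
          rw [pow_add, ← smul_mul_smul_comm]
          exact mul_mem hn hm
        add_mem' := by
          rintro u v ⟨hu, n, hn⟩ ⟨hv, m, hm⟩
          refine ⟨add_mem hu hv, n + m, ?_⟩
          rw [smul_add]
          refine add_mem ?_ ?_
          · rw [add_comm, pow_add, mul_smul]; exact T.smul_mem hn _
          · rw [pow_add, mul_smul]; exact T.smul_mem hm _
        algebraMap_mem' := fun r => ⟨U.algebraMap_mem r, 0, T.smul_mem (T.algebraMap_mem r) _⟩ }
    have hTW : T ≤ W := fun u hu => ⟨hTU.le hu, 0, T.smul_mem hu _⟩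
    have hWU : W ≤ U := fun u hu => hu.1
    rcases hTU.eq_or_eq hTW hWU with h | h
    · left
      intro u hu hau
      rw [← h]
      exact ⟨hu, 1, by simpa using hau⟩
    · right
      intro u hu
      rw [← h] at hu
      exact hu.2
  -- Saturation of `T` excludes that all of `I` acts locally nilpotently on `U / T`.
  obtain ⟨a, haI, hinj⟩ : ∃ a ∈ I, ∀ u ∈ U, a • u ∈ T → u ∈ T := by
    by_contra! hcon
    refine hTU.lt.not_ge fun u hu => ?_
    let J : Ideal R := T.toSubmodule.comap (LinearMap.toSpanSingleton R S u)
    have hJ : I ≤ J.radical := by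
      intro a ha
      rcases dich a with h | h
      · obtain ⟨v, hv, hav, hvT⟩ := hcon a ha
        exact absurd (h v hv hav) hvT
      · obtain ⟨n, hn⟩ := h u hu
        exact ⟨n, hn⟩
    obtain ⟨n, hn⟩ := Ideal.exists_pow_le_of_le_radical_of_fg hJ hfg
    refine hT u (I ^ n) ?_ fun b hb => hn hb
    rw [Ideal.map_pow, hI, ← Ideal.one_eq_top, one_pow]
  -- `T + aU` is a ring, and it is not `T`: so `a` acts surjectively on `U / T`.
  have hsurj : ∀ u ∈ U, ∃ t ∈ T, ∃ v ∈ U, u = t + a • v := by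
    let W : Subalgebra R S :=
      { carrier := {u | ∃ t ∈ T, ∃ v ∈ U, u = t + a • v}
        mul_mem' := by
          rintro _ _ ⟨t, ht, v, hv, rfl⟩ ⟨t', ht', v', hv', rfl⟩
          refine ⟨t * t', mul_mem ht ht', t * v' + v * t' + a • (v * v'), ?_, ?_⟩
          · exact add_mem (add_mem (mul_mem (hTU.le ht) hv') (mul_mem hv (hTU.le ht')))
              (U.smul_mem (mul_mem hv hv') _)
          · simp only [Algebra.smul_def]; ring
        add_mem' := by
          rintro _ _ ⟨t, ht, v, hv, rfl⟩ ⟨t', ht', v', hv', rfl⟩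
          exact ⟨t + t', add_mem ht ht', v + v', add_mem hv hv', by rw [smul_add]; abel⟩
        algebraMap_mem' := fun r => ⟨_, T.algebraMap_mem r, 0, zero_mem U, by simp⟩ }
    have hTW : T ≤ W := fun u hu => ⟨u, hu, 0, zero_mem U, by simp⟩
    have hWU : W ≤ U := by
      rintro _ ⟨t, ht, v, hv, rfl⟩
      exact add_mem (hTU.le ht) (U.smul_mem hv _)
    rcases hTU.eq_or_eq hTW hWU with h | h
    · refine absurd (fun u hu => hinj u hu ?_) hTU.lt.not_ge
      rw [← h]
      exact ⟨0, zero_mem T, u, hu, by simp⟩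
    · intro u hu
      rw [← h] at hu
      exact hu
  obtain ⟨t, ht, v, hv, hsv⟩ := hsurj _ (hs a haI)
  have hav : a • (s - v) ∈ T := by rw [smul_sub, hsv, add_sub_cancel_right]; exact ht
  have : s - v ∈ T := by
    refine hT _ I hI fun b hb => hinj _ ?_ ?_
    · rw [smul_sub]; exact sub_mem (hs b hb) (U.smul_mem hv _)
    · rw [smul_comm]; exact T.smul_mem hav _
  simpa using add_mem (hTU.le this) hv

theorem IsSaturated.of_le [WellFoundedLT (Subalgebra R S)] [WellFoundedGT (Subalgebra R S)]
    {T U : Subalgebra R S} (hT : IsSaturated R' T) (hTU : T ≤ U) : IsSaturated R' U := by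
  obtain ⟨a, rfl, n, rfl, ha⟩ := exists_covBy_seq_of_wellFoundedLT_wellFoundedGT_of_le hTU
  have : ∀ i ≤ n, IsSaturated R' (a i) := by
    intro i hi
    induction i with
    | zero => exact hT
    | succ i ih => exact (ih (by lia)).of_covBy (ha i (by lia))
  exact this n le_rfl

/-! ### Contraction and base change of subalgebras -/

/-- The contraction to `S` of an `R'`-subalgebra of `R' ⊗ S`: its preimage under
`x ↦ 1 ⊗ x`. -/
noncomputable def contraction (N : Subalgebra R' (R' ⊗[R] S)) : Subalgebra R S :=
  (N.restrictScalars R).comap Algebra.TensorProduct.includeRight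

theorem mem_contraction {N : Subalgebra R' (R' ⊗[R] S)} {x : S} :
    x ∈ contraction N ↔ (1 : R') ⊗ₜ[R] x ∈ N := Iff.rfl

theorem isSaturated_contraction (N : Subalgebra R' (R' ⊗[R] S)) :
    IsSaturated R' (contraction N) := by
  intro x I hI hx
  let J : Ideal R' := N.toSubmodule.comap (LinearMap.toSpanSingleton R' _ ((1 : R') ⊗ₜ[R] x))
  have hJ : I.map (algebraMap R R') ≤ J := by
    rw [Ideal.map_le_iff_le_comap]
    intro a ha
    have := mem_contraction.1 (hx a ha)
    change algebraMap R R' a • ((1 : R') ⊗ₜ[R] x) ∈ N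
    rwa [algebraMap_smul, ← TensorProduct.tmul_smul]
  have h1 : (1 : R') ∈ J := hJ (hI ▸ Submodule.mem_top)
  have h2 : (1 : R') • ((1 : R') ⊗ₜ[R] x) ∈ N := h1
  rwa [one_smul] at h2

/-- If `x` dies in `R' ⊗ M` with `R'` flat, then the annihilator of `x` extends to the unit ideal
of `R'`. -/
theorem map_ker_toSpanSingleton_eq_top [Module.Flat R R'] {M : Type*} [AddCommGroup M] [Module R M]
    {x : M} (hx : (1 : R') ⊗ₜ[R] x = 0) :
    Ideal.map (algebraMap R R') (LinearMap.ker (LinearMap.toSpanSingleton R M x)) = ⊤ := by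
  set I : Ideal R := LinearMap.ker (LinearMap.toSpanSingleton R M x)
  have hex := Module.Flat.lTensor_exact R'
    (LinearMap.exact_subtype_ker_map (LinearMap.toSpanSingleton R M x))
  obtain ⟨z, hz⟩ := (hex ((1 : R') ⊗ₜ[R] (1 : R))).1 (by simpa using hx)
  have key : ∀ z : R' ⊗[R] I, TensorProduct.rid R R' (LinearMap.lTensor R' I.subtype z) ∈
      I.map (algebraMap R R') := by
    intro z
    induction z with
    | zero => simp
    | add u v hu hv => rw [map_add, map_add]; exact add_mem hu hv
    | tmul r a =>
      simp only [LinearMap.lTensor_tmul, Submodule.subtype_apply, TensorProduct.rid_tmul,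
        Algebra.smul_def]
      exact Ideal.mul_mem_right _ _ (Ideal.mem_map_of_mem _ a.2)
  rw [Ideal.eq_top_iff_one]
  have := key z
  erw [hz] at this
  simpa using this

theorem baseChange_le_iff {T : Subalgebra R S} {N : Subalgebra R' (R' ⊗[R] S)} :
    T.baseChange R' ≤ N ↔ T ≤ contraction N := by
  refine ⟨fun h x hx => h (Subalgebra.tmul_mem_baseChange hx 1), ?_⟩
  rintro h _ ⟨z, rfl⟩
  induction z with
  | zero => simp
  | add u v hu hv => rw [map_add]; exact add_mem hu hv
  | tmul r x =>
    have := N.smul_mem (mem_contraction.1 (h x.2)) r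
    simpa [TensorProduct.smul_tmul'] using this

theorem mem_baseChange_iff (T : Subalgebra R S) (y : R' ⊗[R] S) :
    y ∈ T.baseChange R' ↔ LinearMap.lTensor R' T.toSubmodule.mkQ y = 0 := by
  have hex := lTensor_exact R' (LinearMap.exact_subtype_mkQ T.toSubmodule)
    (Submodule.mkQ_surjective _)
  rw [hex y]
  rfl

theorem IsSaturated.contraction_baseChange [Module.Flat R R'] {T : Subalgebra R S}
    (hT : IsSaturated R' T) : contraction (T.baseChange R') = T := by
  refine le_antisymm (fun x hx => ?_) fun x hx => Subalgebra.tmul_mem_baseChange hx 1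
  rw [mem_contraction, mem_baseChange_iff, LinearMap.lTensor_tmul] at hx
  refine hT x _ (map_ker_toSpanSingleton_eq_top hx) fun a ha => ?_
  rw [LinearMap.mem_ker, LinearMap.toSpanSingleton_apply, ← map_smul, Submodule.mkQ_apply,
    Submodule.Quotient.mk_eq_zero] at ha
  exact ha

theorem tmul_eq_one_tmul_smul [Algebra.IsEpi R R'] {M : Type*} [AddCommGroup M] [Module R M]
    [Module R' M] [IsScalarTower R R' M] (r : R') (m : M) :
    r ⊗ₜ[R] m = (1 : R') ⊗ₜ[R] (r • m) := by
  have h := (Algebra.isEpi_iff_forall_one_tmul_eq R R').1 inferInstance r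
  have := congrArg (LinearMap.lTensor R' ((LinearMap.toSpanSingleton R' M m).restrictScalars R)) h
  simpa using this.symm

/-- Every `R'`-subalgebra `N` of `R' ⊗ S` is generated over `R'` by its contraction `N₀`: by
flatness `R' ⊗ (S / N₀)` embeds into `R' ⊗ ((R' ⊗ S) / N)`, and because `R → R'` is an epimorphism
the image of `y` there is `1 ⊗ [y]`, which vanishes for `y ∈ N`. -/
theorem baseChange_contraction [Module.Flat R R'] [Algebra.IsEpi R R']
    (N : Subalgebra R' (R' ⊗[R] S)) : (contraction N).baseChange R' = N := by
  refine le_antisymm (baseChange_le_iff.2 le_rfl) fun y hy => ?_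
  rw [mem_baseChange_iff]
  let Q := (R' ⊗[R] S) ⧸ N.toSubmodule
  let q : (R' ⊗[R] S) →ₗ[R] Q := N.toSubmodule.mkQ.restrictScalars R
  let g : S →ₗ[R] Q := q ∘ₗ (Algebra.TensorProduct.includeRight : S →ₐ[R] R' ⊗[R] S).toLinearMap
  have hg : ∀ x, g x = 0 ↔ x ∈ contraction N := fun x =>
    Submodule.Quotient.mk_eq_zero N.toSubmodule
  let gbar : S ⧸ (contraction N).toSubmodule →ₗ[R] Q :=
    (contraction N).toSubmodule.liftQ g fun x hx => (hg x).2 hx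
  have hinj : Function.Injective gbar := by
    rw [← LinearMap.ker_eq_bot]
    exact Submodule.ker_liftQ_eq_bot _ _ _ fun x hx => (hg x).1 hx
  have hcomp : gbar ∘ₗ (contraction N).toSubmodule.mkQ = g := Submodule.liftQ_mkQ _ _ _
  apply Module.Flat.lTensor_preserves_injective_linearMap (M := R') gbar hinj
  rw [map_zero, ← LinearMap.comp_apply, ← LinearMap.lTensor_comp, hcomp]
  have key : ∀ y, LinearMap.lTensor R' g y = (1 : R') ⊗ₜ[R] q y := by
    intro y
    induction y with
    | zero => simp
    | add u v hu hv => rw [map_add, map_add, hu, hv, TensorProduct.tmul_add]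
    | tmul r x =>
      rw [LinearMap.lTensor_tmul, tmul_eq_one_tmul_smul]
      congr 1
      change r • N.toSubmodule.mkQ ((1 : R') ⊗ₜ[R] x) = N.toSubmodule.mkQ (r ⊗ₜ[R] x)
      rw [← map_smul, TensorProduct.smul_tmul', smul_eq_mul, mul_one]
  rw [key]
  have : q y = 0 := (Submodule.Quotient.mk_eq_zero N.toSubmodule).2 hy
  rw [this, TensorProduct.tmul_zero]

/-- Contraction as an order embedding of `[R', R' ⊗ S]` into `[R, S]`; it reflects the order
because every `N` is recovered from its contraction by base change. -/
noncomputable def contractionEmbedding [Module.Flat R R'] [Algebra.IsEpi R R'] :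
    Subalgebra R' (R' ⊗[R] S) ↪o Subalgebra R S :=
  OrderEmbedding.ofMapLEIff contraction fun N N' => by
    rw [← baseChange_le_iff, baseChange_contraction]

end

open TensorProduct in
/-- If `R ⊆ S` is a catenarian FCP extension and `R → R'` is a flat
epimorphism of commutative rings, then `R' ⊆ R' ⊗_R S` is catenarian. -/
theorem stmt_8 {R S R' : Type u} [CommRing R] [CommRing S] [CommRing R']
    [Algebra R S] [Algebra R R']
    (hinj : Function.Injective (algebraMap R S)) (hFCP : IsFCPExt R S)
    (hcat : IsCatenarianExt R S)
    (hflat : Module.Flat R R')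
    (hepi : CategoryTheory.Epi (CommRingCat.ofHom (algebraMap R R'))) :
    IsCatenarianExt R' (R' ⊗[R] S) := by
  have : Algebra.IsEpi R R' := CommRingCat.epi_iff_epi.1 hepi
  have := wellFoundedLT_of_chains_finite hFCP
  have := wellFoundedGT_of_chains_finite hFCP
  refine IsCatenarianFromTo.of_orderEmbedding_Ici hcat contractionEmbedding fun T hT => ?_
  exact ⟨T.baseChange R', ((isSaturated_contraction _).of_le hT).contraction_baseChange⟩
end
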